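/- arXiv:1506.06523 — 2 statements merged into one kernel-verified Lean document; each statement's English description precedes it below -/
import Mathlib

section
/- Let ℋ be a separable complex Hilbert space with Hilbert basis (e_i)_{i∈I}, and let H be a subgroup of the invertible bounded operators on ℋ such that every h ∈ H has the form h = λ·1 + k with λ ∈ ℂ and k Hilbert–Schmidt (∑'_i ‖k e_i‖² < ∞). Suppose there is a constant C < ∞ such that for every h ∈ H, ∑'_i ‖(h h* − 1) e_i‖² ≤ C² (i.e. the Hilbert–Schmidt norms ‖h h* − 1‖₂ are uniformly bounded by C). Then H is unitarizable: there exists an invertible s ∈ B(ℋ) such that s⁻¹ h s is unitary for every h ∈ H. -/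
open scoped ENNReal

/-- Existence of a unique minimizer for a uniformly midpoint-convex lsc functional. -/
lemma exists_unique_min_aux {X : Type*} [NormedAddCommGroup X] [NormedSpace ℝ X] [CompleteSpace X]
    (S : Set X) (hS : IsClosed S) (hmid : ∀ p ∈ S, ∀ q ∈ S, (2⁻¹ : ℝ) • (p + q) ∈ S)
    (Φ : X → ℝ≥0∞) (hΦ : LowerSemicontinuous Φ) (c : ℝ) (hc : 0 < c)
    (hconv : ∀ p q, 2 * (Φ ((2⁻¹ : ℝ) • (p + q)) + ENNReal.ofReal (c * ‖p - q‖ ^ 2)) ≤ Φ p + Φ q)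
    (p₀ : X) (hp₀ : p₀ ∈ S) (hfin : Φ p₀ ≠ ⊤) :
    ∃ p ∈ S, ∀ q ∈ S, Φ q ≤ Φ p → q = p := by
  set m : ℝ≥0∞ := ⨅ p : S, Φ p with hm
  have hmle : ∀ p ∈ S, m ≤ Φ p := fun p hp => iInf_le (fun p : S => Φ p) ⟨p, hp⟩
  have hmtop : m ≠ ⊤ := ne_top_of_le_ne_top hfin (hmle p₀ hp₀)
  have key : ∀ p ∈ S, ∀ q ∈ S, ∀ d : ℝ, 0 ≤ d → Φ p ≤ m + ENNReal.ofReal d →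
      Φ q ≤ m + ENNReal.ofReal d → c * ‖p - q‖ ^ 2 ≤ d := by
    intro p hp q hq d hd h1 h2
    have h3 := hconv p q
    have h4 := hmle _ (hmid p hp q hq)
    have h5 : 2 * (m + ENNReal.ofReal (c * ‖p - q‖ ^ 2)) ≤ 2 * (m + ENNReal.ofReal d) := by
      calc _ ≤ 2 * (Φ ((2⁻¹ : ℝ) • (p + q)) + ENNReal.ofReal (c * ‖p - q‖ ^ 2)) := by gcongr
        _ ≤ _ := h3
        _ ≤ _ := add_le_add h1 h2
        _ = _ := by rw [two_mul]
    rw [ENNReal.mul_le_mul_iff_right (by norm_num) (by norm_num)] at h5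
    rw [ENNReal.add_le_add_iff_left hmtop] at h5
    exact (ENNReal.ofReal_le_ofReal_iff hd).1 h5
  have hex : ∀ n : ℕ, ∃ p ∈ S, Φ p ≤ m + ENNReal.ofReal (1 / ((n : ℝ) + 1)) := by
    intro n
    have hpos : 0 < ENNReal.ofReal (1 / ((n : ℝ) + 1)) := by
      rw [ENNReal.ofReal_pos]; positivity
    have hlt : m < m + ENNReal.ofReal (1 / ((n : ℝ) + 1)) :=
      ENNReal.lt_add_right hmtop hpos.ne'
    obtain ⟨p, hp⟩ := iInf_lt_iff.1 hlt
    exact ⟨p, p.2, hp.le⟩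
  choose u huS hu using hex
  have hmono : ∀ n k : ℕ, n ≤ k → Φ (u k) ≤ m + ENNReal.ofReal (1 / ((n : ℝ) + 1)) := by
    intro n k hnk
    refine (hu k).trans ?_
    gcongr
  have hcau : CauchySeq u := by
    refine cauchySeq_of_le_tendsto_0 (fun n : ℕ => Real.sqrt (c⁻¹ * (1 / ((n : ℝ) + 1)))) ?_ ?_
    · intro n k N hn hk
      rw [dist_eq_norm]
      apply Real.le_sqrt_of_sq_le
      have := key _ (huS n) _ (huS k) (1 / ((N : ℝ) + 1)) (by positivity)
        (hmono _ _ hn) (hmono _ _ hk)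
      rwa [le_inv_mul_iff₀ hc]
    · have h := (tendsto_one_div_add_atTop_nhds_zero_nat (𝕜 := ℝ)).const_mul c⁻¹
      have h2 := (Real.continuous_sqrt.tendsto _).comp h
      simpa [Function.comp_def] using h2
  obtain ⟨p, hp⟩ := cauchySeq_tendsto_of_complete hcau
  have hpS : p ∈ S := hS.mem_of_tendsto hp (Filter.Eventually.of_forall huS)
  have hple : Φ p ≤ m := by
    apply ENNReal.le_of_forall_pos_le_add
    intro ε hε _
    obtain ⟨n, hn⟩ := exists_nat_one_div_lt (K := ℝ) (show (0 : ℝ) < ε from hε)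
    have hcl := hΦ.isClosed_preimage (m + ENNReal.ofReal (1 / ((n : ℝ) + 1)))
    have : p ∈ Φ ⁻¹' Set.Iic (m + ENNReal.ofReal (1 / ((n : ℝ) + 1))) :=
      hcl.mem_of_tendsto hp (Filter.eventually_atTop.2 ⟨n, fun k hk => hmono n k hk⟩)
    refine (show Φ p ≤ _ from this).trans ?_
    gcongr
    rw [← ENNReal.ofReal_coe_nnreal]
    exact ENNReal.ofReal_le_ofReal hn.le
  refine ⟨p, hpS, fun q hq hqp => ?_⟩
  have h0 := key q hq p hpS 0 le_rfl (by simpa using hqp.trans hple) (by simpa using hple)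
  have h1 : ‖q - p‖ ^ 2 ≤ 0 := by
    by_contra hcon
    push Not at hcon
    have := mul_pos hc hcon
    linarith
  have h2 : ‖q - p‖ = 0 := by
    have := sq_nonneg ‖q - p‖
    exact pow_eq_zero_iff (two_ne_zero) |>.1 (le_antisymm h1 this)
  exact sub_eq_zero.1 (norm_eq_zero.1 h2)

section HS

variable {ℋ : Type*} [NormedAddCommGroup ℋ] [InnerProductSpace ℂ ℋ] [CompleteSpace ℋ]
  {I : Type*}

/-- Squared Hilbert–Schmidt norm, as an extended nonnegative real. -/
noncomputable def hsSq (e : HilbertBasis I ℂ ℋ) (x : ℋ →L[ℂ] ℋ) : ℝ≥0∞ :=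
  ∑' i, ENNReal.ofReal (‖x (e i)‖ ^ 2)

lemma hsSq_parallelogram (e : HilbertBasis I ℂ ℋ) (x y : ℋ →L[ℂ] ℋ) :
    hsSq e (x + y) + hsSq e (x - y) = 2 * (hsSq e x + hsSq e y) := by
  unfold hsSq
  rw [← ENNReal.tsum_add, ← ENNReal.tsum_add, ← ENNReal.tsum_mul_left]
  congr 1
  ext1 i
  have h2 : (2 : ℝ≥0∞) = ENNReal.ofReal 2 := by simp
  rw [h2, ← ENNReal.ofReal_add (by positivity) (by positivity),
    ← ENNReal.ofReal_add (by positivity) (by positivity),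
    ← ENNReal.ofReal_mul (by positivity)]
  congr 1
  have := parallelogram_law_with_norm ℂ (x (e i)) (y (e i))
  simp only [add_apply, sub_apply]
  nlinarith

lemma hsSq_smul (e : HilbertBasis I ℂ ℋ) (r : ℝ) (x : ℋ →L[ℂ] ℋ) :
    hsSq e (r • x) = ENNReal.ofReal (r ^ 2) * hsSq e x := by
  unfold hsSq
  rw [← ENNReal.tsum_mul_left]
  congr 1
  ext1 i
  rw [← ENNReal.ofReal_mul (by positivity)]
  congr 1
  simp [norm_smul, mul_pow]

lemma hsSq_add_le (e : HilbertBasis I ℂ ℋ) (x y : ℋ →L[ℂ] ℋ) :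
    hsSq e (x - y) ≤ 2 * (hsSq e x + hsSq e y) := by
  rw [← hsSq_parallelogram]; exact le_add_self

lemma hsSq_lsc (e : HilbertBasis I ℂ ℋ) : LowerSemicontinuous (hsSq e) := by
  unfold hsSq
  refine lowerSemicontinuous_tsum fun i => Continuous.lowerSemicontinuous ?_
  exact ENNReal.continuous_ofReal.comp (by fun_prop)

lemma norm_sq_le_hsSq (e : HilbertBasis I ℂ ℋ) (x : ℋ →L[ℂ] ℋ) :
    ENNReal.ofReal (‖x‖ ^ 2) ≤ hsSq e x := by
  by_cases htop : hsSq e x = ⊤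
  · simp [htop]
  have hsum : Summable fun i => ‖x (e i)‖ ^ 2 := by
    have := ENNReal.summable_toReal htop
    refine this.congr fun i => ?_
    rw [ENNReal.toReal_ofReal (by positivity)]
  have heq : hsSq e x = ENNReal.ofReal (∑' i, ‖x (e i)‖ ^ 2) := by
    unfold hsSq
    rw [ENNReal.ofReal_tsum_of_nonneg (fun i => by positivity) hsum]
  rw [heq]
  apply ENNReal.ofReal_le_ofReal
  set T := ∑' i, ‖x (e i)‖ ^ 2 with hT
  have hT0 : 0 ≤ T := tsum_nonneg fun i => by positivity
  have hn : ‖star x‖ ≤ Real.sqrt T := by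
    refine ContinuousLinearMap.opNorm_le_bound _ (Real.sqrt_nonneg _) fun v => ?_
    refine (sq_le_sq₀ (norm_nonneg _) (by positivity)).1 ?_
    rw [mul_pow, Real.sq_sqrt hT0]
    have hs := e.hasSum_inner_mul_inner (star x v) (star x v)
    have hs2 : HasSum (fun i => ‖inner ℂ (e i) (star x v)‖ ^ 2) (‖star x v‖ ^ 2) := by
      have h := (Complex.hasSum_re hs)
      rw [← inner_self_eq_norm_sq (𝕜 := ℂ)]
      refine h.congr_fun ?_
      intro i
      have h3 := inner_mul_symm_re_eq_norm (𝕜 := ℂ) (star x v) (e i)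
      rw [norm_mul, norm_inner_symm (star x v) (e i), ← sq] at h3
      exact h3.symm
    rw [← hs2.tsum_eq, ← tsum_mul_right]
    refine hs2.summable.tsum_le_tsum ?_ (hsum.mul_right _)
    intro i
    rw [ContinuousLinearMap.star_eq_adjoint, ContinuousLinearMap.adjoint_inner_right, ← mul_pow]
    gcongr
    exact norm_inner_le_norm _ _
  rw [norm_star] at hn
  calc ‖x‖ ^ 2 ≤ Real.sqrt T ^ 2 := by gcongr
    _ = T := Real.sq_sqrt hT0

end HS

set_option maxHeartbeats 2000000 in
/-- A group of Hilbert–Schmidt perturbations of scalars with `‖h h* - 1‖₂`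
uniformly bounded is unitarizable. -/
theorem stmt16 {ℋ : Type*} [NormedAddCommGroup ℋ] [InnerProductSpace ℂ ℋ]
    [CompleteSpace ℋ] [TopologicalSpace.SeparableSpace ℋ]
    {I : Type*} (e : HilbertBasis I ℂ ℋ) (H : Subgroup (ℋ →L[ℂ] ℋ)ˣ)
    (hform : ∀ h ∈ H, ∃ (lam : ℂ) (k : ℋ →L[ℂ] ℋ),
      (h : ℋ →L[ℂ] ℋ) = lam • (1 : ℋ →L[ℂ] ℋ) + k ∧
        Summable fun i : I => ‖k (e i)‖ ^ 2)
    (C : ℝ)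
    (hC : ∀ h ∈ H,
      (Summable fun i : I =>
        ‖((h : ℋ →L[ℂ] ℋ) * star (h : ℋ →L[ℂ] ℋ) - 1) (e i)‖ ^ 2) ∧
      ∑' i : I, ‖((h : ℋ →L[ℂ] ℋ) * star (h : ℋ →L[ℂ] ℋ) - 1) (e i)‖ ^ 2 ≤ C ^ 2) :
    ∃ s : (ℋ →L[ℂ] ℋ)ˣ, ∀ h ∈ H,
      (↑s⁻¹ : ℋ →L[ℂ] ℋ) * (h : ℋ →L[ℂ] ℋ) * (s : ℋ →L[ℂ] ℋ) ∈ unitary (ℋ →L[ℂ] ℋ) := by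
  classical
  set A := ℋ →L[ℂ] ℋ with hA
  -- Hilbert–Schmidt bounds
  have hHS : ∀ h ∈ H, hsSq e ((h : A) * star (h : A) - 1) ≤ ENNReal.ofReal (C ^ 2) := by
    intro h hh
    obtain ⟨h1, h2⟩ := hC h hh
    unfold hsSq
    rw [← ENNReal.ofReal_tsum_of_nonneg (fun i => by positivity) h1]
    exact ENNReal.ofReal_le_ofReal h2
  set M : ℝ := 1 + |C| with hMdef
  have hMpos : 0 < M := by positivity
  have hone : ‖(1 : A)‖ ≤ 1 := ContinuousLinearMap.norm_id_le
  have hnorm : ∀ h ∈ H, ‖(h : A) * star (h : A)‖ ≤ M := by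
    intro h hh
    have h1 := (norm_sq_le_hsSq e _).trans (hHS h hh)
    have h2 := (ENNReal.ofReal_le_ofReal_iff (by positivity)).1 h1
    have h3 : ‖(h : A) * star (h : A) - 1‖ ≤ |C| := by
      simpa using sq_le_sq.1 h2
    calc ‖(h : A) * star (h : A)‖ = ‖1 + ((h : A) * star (h : A) - 1)‖ := by
          congr 1; abel
      _ ≤ ‖(1 : A)‖ + ‖(h : A) * star (h : A) - 1‖ := norm_add_le _ _
      _ ≤ M := by rw [hMdef]; gcongr
  have hnormsq : ∀ h ∈ H, ‖(h : A)‖ * ‖(h : A)‖ ≤ M := by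
    intro h hh
    rw [← CStarRing.norm_self_mul_star]
    exact hnorm h hh
  -- lower bound
  have hlow : ∀ h ∈ H, algebraMap ℝ A M⁻¹ ≤ (h : A) * star (h : A) := by
    intro h hh
    have h1 : ((h⁻¹ : Aˣ) : A) * star ((h⁻¹ : Aˣ) : A) ≤ algebraMap ℝ A M :=
      (IsSelfAdjoint.le_algebraMap_norm_self (.mul_star_self _)).trans
        (algebraMap_mono A (hnorm _ (H.inv_mem hh)))
    have h2 := star_right_conjugate_le_conjugate h1 (h : A)
    have h3 : (h : A) * (((h⁻¹ : Aˣ) : A) * star ((h⁻¹ : Aˣ) : A)) * star (h : A) = 1 := by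
      rw [← mul_assoc, Units.mul_inv, one_mul, ← star_mul, Units.mul_inv, star_one]
    rw [h3] at h2
    have h4 : (h : A) * algebraMap ℝ A M * star (h : A) = M • ((h : A) * star (h : A)) := by
      rw [Algebra.algebraMap_eq_smul_one, mul_smul_comm, mul_one, smul_mul_assoc]
    rw [h4] at h2
    have h5 := smul_le_smul_of_nonneg_left h2 (inv_nonneg.2 hMpos.le)
    rw [smul_smul, inv_mul_cancel₀ hMpos.ne', one_smul] at h5
    rwa [Algebra.algebraMap_eq_smul_one]
  let S : Set A := {p | ∀ h ∈ H, algebraMap ℝ A M⁻¹ ≤ (h : A) * p * star (h : A)}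
  let Φ : A → ℝ≥0∞ := fun p => ⨆ x : H × H,
    hsSq e (((x.1 : Aˣ) : A) * p * star ((x.1 : Aˣ) : A)
      - ((x.2 : Aˣ) : A) * star ((x.2 : Aˣ) : A))
  have hSclosed : IsClosed S := by
    have : S = ⋂ h ∈ H, {p : A | algebraMap ℝ A M⁻¹ ≤ (h : A) * p * star (h : A)} := by
      ext p; simp [S]
    rw [this]
    refine isClosed_biInter fun h _ => isClosed_le continuous_const (by fun_prop)
  have hSmid : ∀ p ∈ S, ∀ q ∈ S, (2⁻¹ : ℝ) • (p + q) ∈ S := by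
    intro p hp q hq h hh
    have h1 := smul_le_smul_of_nonneg_left (add_le_add (hp h hh) (hq h hh))
      (show (0 : ℝ) ≤ 2⁻¹ by norm_num)
    have h2 : (2⁻¹ : ℝ) • (algebraMap ℝ A M⁻¹ + algebraMap ℝ A M⁻¹) = algebraMap ℝ A M⁻¹ := by
      rw [← two_smul ℝ, smul_smul]; norm_num
    rw [h2] at h1
    rwa [mul_smul_comm, smul_mul_assoc, mul_add, add_mul]
  have hΦlsc : LowerSemicontinuous Φ := by
    refine lowerSemicontinuous_iSup fun x => ?_
    exact (hsSq_lsc e).comp (by fun_prop)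
  have hone_mem : (1 : A) ∈ S := by
    intro h hh
    rw [mul_one]; exact hlow h hh
  have hfin : Φ 1 ≠ ⊤ := by
    have : Φ 1 ≤ 2 * (ENNReal.ofReal (C ^ 2) + ENNReal.ofReal (C ^ 2)) := by
      refine iSup_le fun x => ?_
      rw [mul_one, ← sub_sub_sub_cancel_right _ _ (1 : A)]
      refine (hsSq_add_le e _ _).trans ?_
      gcongr
      · exact hHS _ x.1.2
      · exact hHS _ x.2.2
    refine ne_top_of_le_ne_top ?_ this
    finiteness
  have hconv : ∀ p q : A, 2 * (Φ ((2⁻¹ : ℝ) • (p + q))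
      + ENNReal.ofReal ((4 * M ^ 2)⁻¹ * ‖p - q‖ ^ 2)) ≤ Φ p + Φ q := by
    intro p q
    simp only [Φ]
    rw [ENNReal.iSup_add, ENNReal.mul_iSup]
    refine iSup_le fun x => ?_
    obtain ⟨⟨g, hg⟩, ⟨h, hh⟩⟩ := x
    simp only
    set X : A := (g : A) * p * star (g : A) - (h : A) * star (h : A) with hX
    set Y : A := (g : A) * q * star (g : A) - (h : A) * star (h : A) with hY
    have e1 : (g : A) * ((2⁻¹ : ℝ) • (p + q)) * star (g : A) - (h : A) * star (h : A)
        = (2⁻¹ : ℝ) • X + (2⁻¹ : ℝ) • Y := by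
      rw [mul_smul_comm, smul_mul_assoc, mul_add, add_mul, hX, hY]
      module
    have e2 : (2⁻¹ : ℝ) • X - (2⁻¹ : ℝ) • Y
        = (2⁻¹ : ℝ) • ((g : A) * (p - q) * star (g : A)) := by
      rw [mul_sub, sub_mul, hX, hY]
      module
    have hpar := hsSq_parallelogram e ((2⁻¹ : ℝ) • X) ((2⁻¹ : ℝ) • Y)
    have hlb : ENNReal.ofReal ((4 * M ^ 2)⁻¹ * ‖p - q‖ ^ 2)
        ≤ hsSq e ((2⁻¹ : ℝ) • X - (2⁻¹ : ℝ) • Y) := by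
      rw [e2]
      refine le_trans (ENNReal.ofReal_le_ofReal ?_) (norm_sq_le_hsSq e _)
      set Z : A := (g : A) * (p - q) * star (g : A) with hZ
      have hback : p - q = ((g⁻¹ : Aˣ) : A) * Z * star ((g⁻¹ : Aˣ) : A) := by
        have : star (g : A) * star ((g⁻¹ : Aˣ) : A) = 1 := by
          rw [← star_mul, Units.inv_mul, star_one]
        rw [hZ]
        simp only [mul_assoc]
        rw [this, mul_one, Units.inv_mul_cancel_left]
      have hle : ‖p - q‖ ≤ M * ‖Z‖ := by
        calc ‖p - q‖ = ‖((g⁻¹ : Aˣ) : A) * Z * star ((g⁻¹ : Aˣ) : A)‖ := by rw [← hback]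
          _ ≤ ‖((g⁻¹ : Aˣ) : A)‖ * ‖Z‖ * ‖star ((g⁻¹ : Aˣ) : A)‖ := norm_mul₃_le
          _ = (‖((g⁻¹ : Aˣ) : A)‖ * ‖((g⁻¹ : Aˣ) : A)‖) * ‖Z‖ := by rw [norm_star]; ring
          _ ≤ M * ‖Z‖ := by gcongr; exact hnormsq _ (H.inv_mem hg)
      rw [norm_smul, inv_mul_le_iff₀ (by positivity), Real.norm_of_nonneg (by norm_num)]
      calc ‖p - q‖ ^ 2 ≤ (M * ‖Z‖) ^ 2 := by gcongr
        _ = _ := by ring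
    rw [e1]
    calc 2 * (hsSq e ((2⁻¹ : ℝ) • X + (2⁻¹ : ℝ) • Y)
          + ENNReal.ofReal ((4 * M ^ 2)⁻¹ * ‖p - q‖ ^ 2))
        ≤ 2 * (hsSq e ((2⁻¹ : ℝ) • X + (2⁻¹ : ℝ) • Y)
          + hsSq e ((2⁻¹ : ℝ) • X - (2⁻¹ : ℝ) • Y)) := by gcongr
      _ = hsSq e X + hsSq e Y := by
          rw [hpar, hsSq_smul, hsSq_smul, ← mul_add, ← mul_assoc, ← mul_assoc]
          have : (2 : ℝ≥0∞) * 2 * ENNReal.ofReal (2⁻¹ ^ 2) = 1 := by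
            have h2 : (2 : ℝ≥0∞) = ENNReal.ofReal 2 := by simp
            rw [h2, ← ENNReal.ofReal_mul (by norm_num), ← ENNReal.ofReal_mul (by norm_num)]
            norm_num
          rw [this, one_mul]
      _ ≤ _ := add_le_add
          (le_iSup (fun x : H × H => hsSq e (((x.1 : Aˣ) : A) * p * star ((x.1 : Aˣ) : A)
            - ((x.2 : Aˣ) : A) * star ((x.2 : Aˣ) : A))) (⟨g, hg⟩, ⟨h, hh⟩))
          (le_iSup (fun x : H × H => hsSq e (((x.1 : Aˣ) : A) * q * star ((x.1 : Aˣ) : A)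
            - ((x.2 : Aˣ) : A) * star ((x.2 : Aˣ) : A))) (⟨g, hg⟩, ⟨h, hh⟩))
  obtain ⟨p, hpS, hpmin⟩ := exists_unique_min_aux S hSclosed hSmid Φ hΦlsc
    (4 * M ^ 2)⁻¹ (by positivity) hconv 1 hone_mem hfin
  have hfix : ∀ k ∈ H, (k : A) * p * star (k : A) = p := by
    intro k hk
    apply hpmin
    · intro h hh
      have := hpS (h * k) (H.mul_mem hh hk)
      simpa [mul_assoc] using this
    · refine iSup_le fun x => ?_
      refine le_trans (le_of_eq ?_) (le_iSup (fun x : H × H =>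
        hsSq e (((x.1 : Aˣ) : A) * p * star ((x.1 : Aˣ) : A)
          - ((x.2 : Aˣ) : A) * star ((x.2 : Aˣ) : A))) (x.1 * ⟨k, hk⟩, x.2))
      simp [mul_assoc]
  have hple : algebraMap ℝ A M⁻¹ ≤ p := by
    simpa using hpS 1 H.one_mem
  have hMstr : IsStrictlyPositive (algebraMap ℝ A M⁻¹) := by
    refine ⟨algebraMap_nonneg A (by positivity), ?_⟩
    exact (IsUnit.mk0 M⁻¹ (by positivity)).map (algebraMap ℝ A)
  have hp0 : 0 ≤ p := hMstr.nonneg.trans hple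
  have hpu : IsUnit p := CStarAlgebra.isUnit_of_le _ hple hMstr
  have hsu : IsUnit (CFC.sqrt p) := (CFC.isUnit_sqrt_iff p hp0).2 hpu
  obtain ⟨s, hs⟩ := hsu
  have hss : (s : A) * star (s : A) = p := by
    rw [hs, (IsSelfAdjoint.of_nonneg (CFC.sqrt_nonneg p)).star_eq, CFC.sqrt_mul_sqrt_self p hp0]
  refine ⟨s, fun h hh => ?_⟩
  set u : Aˣ := s⁻¹ * h * s with hu
  have hval : (↑s⁻¹ : A) * (h : A) * (s : A) = (u : A) := by simp [hu]
  have huu : (u : A) * star (u : A) = 1 := by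
    rw [← hval]
    calc (↑s⁻¹ : A) * (h : A) * (s : A) * star ((↑s⁻¹ : A) * (h : A) * (s : A))
        = (↑s⁻¹ : A) * ((h : A) * ((s : A) * star (s : A)) * star (h : A)) * star (↑s⁻¹ : A) := by
          simp only [star_mul, mul_assoc]
      _ = 1 := by
          rw [hss, hfix h hh, ← hss, ← mul_assoc, Units.inv_mul, one_mul, ← star_mul,
            Units.inv_mul, star_one]
  rw [hval, Unitary.mem_iff]
  refine ⟨?_, huu⟩
  rw [← Units.inv_eq_of_mul_eq_one_right huu, Units.inv_mul]
end

section
/- Let ℋ be a separable complex Hilbert space with Hilbert basis (e_i)_{i∈I}, and let H be a subgroup of the invertible bounded operators on ℋ. Suppose there is a constant M < ∞ such that for every h ∈ H, ∑'_i ‖(h − 1) e_i‖² ≤ M² (i.e. h − 1 is Hilbert–Schmidt with ‖h − 1‖₂ ≤ M for all h ∈ H). Then H is unitarizable: there exists an invertible s ∈ B(ℋ) such that s⁻¹ h s is unitary for every h ∈ H. -/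
open scoped ENNReal

lemma abs_fix {E : Type*} [NormedAddCommGroup E] [NormedSpace ℝ E] [CompleteSpace E]
    (A : ℝ → Set E) (c : ℝ) (hc : 0 < c) (hcl : ∀ C, IsClosed (A C))
    (hmono : Monotone A) (hneg : ∀ C x, x ∈ A C → 0 ≤ C)
    (hmid : ∀ C x y, x ∈ A C → y ∈ A C → midpoint ℝ x y ∈ A (C - c * ‖x - y‖ ^ 2))
    (hne : ∃ C, (A C).Nonempty) :
    ∃ p, (∃ C, p ∈ A C) ∧ ∀ G : E → E, (∀ C x, x ∈ A C → G x ∈ A C) → G p = p := by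
  set T : Set ℝ := {C | (A C).Nonempty} with hT
  have hbdd : BddBelow T := ⟨0, fun C ⟨x, hx⟩ => hneg C x hx⟩
  set m := sInf T with hm
  have key : ∀ C x y, x ∈ A C → y ∈ A C → c * ‖x - y‖ ^ 2 ≤ C - m := by
    intro C x y hx hy
    have := csInf_le hbdd (show C - c * ‖x - y‖ ^ 2 ∈ T from ⟨_, hmid C x y hx hy⟩)
    linarith
  have hex : ∀ n : ℕ, (A (m + c * (1 / 2 ^ n) ^ 2)).Nonempty := by
    intro n
    obtain ⟨C, ⟨x, hx⟩, hC⟩ := exists_lt_of_csInf_lt (s := T) hne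
      (show sInf T < m + c * (1 / 2 ^ n) ^ 2 by rw [← hm]; simp; positivity)
    exact ⟨x, hmono hC.le hx⟩
  choose u hu using hex
  have hanti : ∀ n k, n ≤ k → u k ∈ A (m + c * (1 / 2 ^ n) ^ 2) := by
    intro n k hnk
    refine hmono ?_ (hu k)
    gcongr
    norm_num
  have hcau : CauchySeq u := by
    refine cauchySeq_of_le_geometric (1/2) 1 (by norm_num) fun n => ?_
    have := key _ _ _ (hu n) (hanti n (n+1) (by omega))
    rw [dist_eq_norm, one_mul, div_pow, one_pow]
    have h2 : ‖u n - u (n+1)‖ ^ 2 ≤ (1 / 2 ^ n) ^ 2 :=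
      le_of_mul_le_mul_left (by linarith) hc
    exact (abs_le_of_sq_le_sq' h2 (by positivity)).2
  obtain ⟨p, hp⟩ := cauchySeq_tendsto_of_complete hcau
  have hpA : ∀ n : ℕ, p ∈ A (m + c * (1 / 2 ^ n) ^ 2) := fun n =>
    (hcl _).mem_of_tendsto hp (Filter.eventually_atTop.2 ⟨n, fun k hk => hanti n k hk⟩)
  refine ⟨p, ⟨_, hpA 0⟩, fun G hG => ?_⟩
  have hle : ∀ n : ℕ, ‖G p - p‖ ≤ (1/2) ^ n := by
    intro n
    have := key _ _ _ (hG _ _ (hpA n)) (hpA n)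
    have h2 : ‖G p - p‖ ^ 2 ≤ (1 / 2 ^ n) ^ 2 :=
      le_of_mul_le_mul_left (by linarith) hc
    rw [div_pow, one_pow]
    exact (abs_le_of_sq_le_sq' h2 (by positivity)).2
  have : ‖G p - p‖ ≤ 0 :=
    ge_of_tendsto' (tendsto_pow_atTop_nhds_zero_of_lt_one (by norm_num) (by norm_num)) hle
  exact sub_eq_zero.1 (norm_le_zero_iff.1 this)

section
set_option linter.unusedSectionVars false
variable {ℋ : Type*} [NormedAddCommGroup ℋ] [InnerProductSpace ℂ ℋ]
    [CompleteSpace ℋ] {I : Type*} (e : HilbertBasis I ℂ ℋ)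

noncomputable def hsS (T : ℋ →L[ℂ] ℋ) : ℝ≥0∞ := ∑' i, ENNReal.ofReal (‖T (e i)‖ ^ 2)

lemma parseval (v : ℋ) : ∑' i, ENNReal.ofReal (‖inner ℂ (e i) v‖ ^ 2) = ENNReal.ofReal (‖v‖ ^ 2) := by
  have h := e.hasSum_inner_mul_inner v v
  have h2 : HasSum (fun i => ‖inner ℂ (e i) v‖ ^ 2) (‖v‖ ^ 2) := by
    have h3 := Complex.hasSum_re h
    convert h3 using 1
    · ext i
      rw [← inner_conj_symm v (e i), RCLike.conj_mul]
      norm_cast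
    · rw [inner_self_eq_norm_sq_to_K]; norm_cast
  rw [← h2.tsum_eq, ENNReal.ofReal_tsum_of_nonneg (fun _ => by positivity) h2.summable]

lemma hsS_adj (T : ℋ →L[ℂ] ℋ) : hsS e (star T) = hsS e T := by
  unfold hsS
  simp_rw [← parseval e]
  rw [ENNReal.tsum_comm]
  congr! 6 with i j
  rw [ContinuousLinearMap.star_eq_adjoint, ContinuousLinearMap.adjoint_inner_right, norm_inner_symm]

lemma norm_le_hsS (T : ℋ →L[ℂ] ℋ) : ENNReal.ofReal (‖T‖ ^ 2) ≤ hsS e T := by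
  rcases eq_or_ne (hsS e T) ⊤ with h | h
  · simp [h]
  rw [← norm_star T]
  have : ‖star T‖ ≤ √(hsS e T).toReal := by
    refine ContinuousLinearMap.opNorm_le_bound _ (by positivity) fun w => ?_
    refine abs_le_of_sq_le_sq' ?_ (by positivity) |>.2
    rw [mul_pow, Real.sq_sqrt (by positivity)]
    rw [← ENNReal.ofReal_le_ofReal_iff (by positivity), ← parseval e,
      ENNReal.ofReal_mul (by positivity), ENNReal.ofReal_toReal h, hsS, ← ENNReal.tsum_mul_right]
    refine ENNReal.tsum_le_tsum fun i => ?_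
    rw [← ENNReal.ofReal_mul (by positivity), ← mul_pow]
    gcongr
    rw [ContinuousLinearMap.star_eq_adjoint, ContinuousLinearMap.adjoint_inner_right]
    exact norm_inner_le_norm _ _
  rw [← ENNReal.ofReal_toReal h]
  apply ENNReal.ofReal_le_ofReal
  calc _ ≤ (√(hsS e T).toReal) ^ 2 := by gcongr
    _ = _ := Real.sq_sqrt (by positivity)

lemma hsS_mul (T R : ℋ →L[ℂ] ℋ) : hsS e (T * R) ≤ ENNReal.ofReal (‖T‖ ^ 2) * hsS e R := by
  unfold hsS
  rw [← ENNReal.tsum_mul_left]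
  refine ENNReal.tsum_le_tsum fun i => ?_
  rw [← ENNReal.ofReal_mul (by positivity), ← mul_pow]
  gcongr
  exact T.le_opNorm _

lemma hsS_para (T R : ℋ →L[ℂ] ℋ) :
    hsS e (T + R) + hsS e (T - R) = 2 * (hsS e T + hsS e R) := by
  unfold hsS
  rw [← ENNReal.tsum_add, ← ENNReal.tsum_add, ← ENNReal.tsum_mul_left]
  congr! 2 with i
  rw [← ENNReal.ofReal_add (by positivity) (by positivity),
    ← ENNReal.ofReal_add (by positivity) (by positivity)]
  rw [show (2:ℝ≥0∞) = ENNReal.ofReal 2 by simp]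
  rw [← ENNReal.ofReal_mul (by positivity)]
  have := parallelogram_law_with_norm ℂ (T (e i)) (R (e i))
  congr 1

lemma hsS_add (T R : ℋ →L[ℂ] ℋ) : hsS e (T + R) ≤ 2 * (hsS e T + hsS e R) := by
  rw [← hsS_para]; exact le_self_add

lemma hsS_sub (T R : ℋ →L[ℂ] ℋ) : hsS e (T - R) ≤ 2 * (hsS e T + hsS e R) := by
  rw [← hsS_para]; exact le_add_self

lemma hsS_lsc : LowerSemicontinuous (hsS e) := by
  unfold hsS
  refine lowerSemicontinuous_tsum fun i => Continuous.lowerSemicontinuous ?_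
  refine ENNReal.continuous_ofReal.comp ?_
  fun_prop

lemma hsS_smul (r : ℝ) (T : ℋ →L[ℂ] ℋ) : hsS e (r • T) = ENNReal.ofReal (r ^ 2) * hsS e T := by
  unfold hsS
  rw [← ENNReal.tsum_mul_left]
  congr! 2 with i
  rw [← ENNReal.ofReal_mul (by positivity)]
  congr 1
  simp [norm_smul, mul_pow]
end

/-- A group of invertible operators with `‖h - 1‖₂` uniformly bounded is
unitarizable. -/
theorem stmt17 {ℋ : Type*} [NormedAddCommGroup ℋ] [InnerProductSpace ℂ ℋ]
    [CompleteSpace ℋ] [TopologicalSpace.SeparableSpace ℋ]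
    {I : Type*} (e : HilbertBasis I ℂ ℋ) (H : Subgroup (ℋ →L[ℂ] ℋ)ˣ)
    (M : ℝ)
    (hM : ∀ h ∈ H,
      (Summable fun i : I => ‖((h : ℋ →L[ℂ] ℋ) - 1) (e i)‖ ^ 2) ∧
      ∑' i : I, ‖((h : ℋ →L[ℂ] ℋ) - 1) (e i)‖ ^ 2 ≤ M ^ 2) :
    ∃ s : (ℋ →L[ℂ] ℋ)ˣ, ∀ h ∈ H,
      (↑s⁻¹ : ℋ →L[ℂ] ℋ) * (h : ℋ →L[ℂ] ℋ) * (s : ℋ →L[ℂ] ℋ) ∈ unitary (ℋ →L[ℂ] ℋ) := by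
  have hS : ∀ h ∈ H, hsS e ((h : ℋ →L[ℂ] ℋ) - 1) ≤ ENNReal.ofReal (M ^ 2) := by
    intro h hh
    obtain ⟨h1, h2⟩ := hM h hh
    rw [hsS, ← ENNReal.ofReal_tsum_of_nonneg (fun _ => by positivity) h1]
    exact ENNReal.ofReal_le_ofReal h2
  set B : ℝ := 1 + |M| with hB
  have hB0 : 0 < B := by positivity
  have hnorm : ∀ h ∈ H, ‖(h : ℋ →L[ℂ] ℋ)‖ ≤ B := by
    intro h hh
    have h1 := (norm_le_hsS e _).trans (hS h hh)
    rw [ENNReal.ofReal_le_ofReal_iff (by positivity)] at h1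
    have h2 := sq_le_sq.1 h1
    rw [abs_of_nonneg (norm_nonneg _)] at h2
    have h3 : ‖(1 : ℋ →L[ℂ] ℋ)‖ ≤ 1 := ContinuousLinearMap.norm_id_le
    calc ‖(h : ℋ →L[ℂ] ℋ)‖ = ‖1 + ((h : ℋ →L[ℂ] ℋ) - 1)‖ := by congr 1; abel
      _ ≤ _ := (norm_add_le _ _).trans (add_le_add h3 h2)
  -- the sublevel sets
  let K : ℝ → Set (ℋ →L[ℂ] ℋ) := fun C => {p | 0 ≤ C ∧
    (∀ g ∈ H, algebraMap ℝ (ℋ →L[ℂ] ℋ) ((B ^ 2)⁻¹) ≤ star (g : ℋ →L[ℂ] ℋ) * p * g) ∧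
    ∀ g ∈ H, ∀ h ∈ H, hsS e (star (g : ℋ →L[ℂ] ℋ) * (p - star (h : ℋ →L[ℂ] ℋ) * h) * g)
      ≤ ENNReal.ofReal C}
  have hlow : ∀ g ∈ H, algebraMap ℝ (ℋ →L[ℂ] ℋ) ((B ^ 2)⁻¹) ≤ star (g : ℋ →L[ℂ] ℋ) * 1 * g := by
    intro g hg
    have h1 : star (↑g⁻¹ : ℋ →L[ℂ] ℋ) * (↑g⁻¹ : ℋ →L[ℂ] ℋ) ≤ algebraMap ℝ (ℋ →L[ℂ] ℋ) (B ^ 2) := by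
      refine CStarAlgebra.star_mul_le_algebraMap_norm_sq.trans ?_
      refine algebraMap_mono _ ?_
      have := hnorm _ (H.inv_mem hg)
      gcongr
    have h2 := star_left_conjugate_le_conjugate h1 (g : ℋ →L[ℂ] ℋ)
    have h3 : star (g : ℋ →L[ℂ] ℋ) * (star (↑g⁻¹ : ℋ →L[ℂ] ℋ) * (↑g⁻¹ : ℋ →L[ℂ] ℋ)) * g = 1 := by
      rw [← mul_assoc, ← star_mul, mul_assoc]; simp
    rw [h3] at h2
    have h4 := smul_le_smul_of_nonneg_left h2 (show 0 ≤ (B ^ 2)⁻¹ by positivity)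
    rw [Algebra.algebraMap_eq_smul_one] at h4 ⊢
    convert h4 using 1
    rw [mul_smul_comm, smul_mul_assoc, smul_smul, inv_mul_cancel₀ (by positivity), one_smul]
  have hSS : ∀ k ∈ H, hsS e (star (k : ℋ →L[ℂ] ℋ) * k - 1) ≤
      2 * (ENNReal.ofReal (B ^ 2) * ENNReal.ofReal (M ^ 2) + ENNReal.ofReal (M ^ 2)) := by
    intro k hk
    have h1 : star (k : ℋ →L[ℂ] ℋ) * k - 1
        = star (k : ℋ →L[ℂ] ℋ) * ((k : ℋ →L[ℂ] ℋ) - 1) + star ((k : ℋ →L[ℂ] ℋ) - 1) := by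
      rw [star_sub, star_one]; noncomm_ring
    rw [h1]
    refine (hsS_add e _ _).trans ?_
    rw [hsS_adj]
    have h2 := hS k hk
    gcongr
    refine (hsS_mul e _ _).trans ?_
    rw [norm_star]
    have := hnorm k hk
    gcongr
  obtain ⟨p, ⟨C, hC0, hpK, -⟩, hfix⟩ := abs_fix K (1 / (4 * B ^ 4)) (by positivity)
    (by
      intro C
      have h0 : K C = {p | 0 ≤ C} ∩
        ((⋂ g ∈ H, {p | algebraMap ℝ (ℋ →L[ℂ] ℋ) ((B ^ 2)⁻¹) ≤ star (g : ℋ →L[ℂ] ℋ) * p * g}) ∩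
        ⋂ g ∈ H, ⋂ h ∈ H, {p | hsS e (star (g : ℋ →L[ℂ] ℋ) * (p - star (h : ℋ →L[ℂ] ℋ) * h) * g)
            ≤ ENNReal.ofReal C}) := by
        ext p; simp [K]
      rw [h0]
      refine isClosed_const.inter (IsClosed.inter ?_ ?_)
      · exact isClosed_biInter fun g _ => isClosed_le (by fun_prop) (by fun_prop)
      · refine isClosed_biInter fun g _ => isClosed_biInter fun h _ => ?_
        exact ((hsS_lsc e).isClosed_preimage _).preimage
          (f := fun p : ℋ →L[ℂ] ℋ => star (g : ℋ →L[ℂ] ℋ) * (p - star (h : ℋ →L[ℂ] ℋ) * h) * g)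
          (by fun_prop))
    (by
      intro C C' hCC p hp
      exact ⟨hp.1.trans hCC, hp.2.1, fun g hg h hh =>
        (hp.2.2 g hg h hh).trans (ENNReal.ofReal_le_ofReal hCC)⟩)
    (fun C x hx => hx.1)
    (by
      intro C x y hx hy
      have hmid : midpoint ℝ x y = (1 / 2 : ℝ) • (x + y) := by
        rw [midpoint_eq_smul_add]; norm_num
      have main : ∀ g ∈ H, ∀ h ∈ H,
          hsS e (star (g : ℋ →L[ℂ] ℋ) * (midpoint ℝ x y - star (h : ℋ →L[ℂ] ℋ) * h) * g)
          + ENNReal.ofReal (1 / (4 * B ^ 4) * ‖x - y‖ ^ 2) ≤ ENNReal.ofReal C := by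
        intro g hg h hh
        set a := star (g : ℋ →L[ℂ] ℋ) * (x - star (h : ℋ →L[ℂ] ℋ) * h) * g with ha
        set b := star (g : ℋ →L[ℂ] ℋ) * (y - star (h : ℋ →L[ℂ] ℋ) * h) * g with hb
        have e1 : star (g : ℋ →L[ℂ] ℋ) * (midpoint ℝ x y - star (h : ℋ →L[ℂ] ℋ) * h) * g
            = (1 / 2 : ℝ) • (a + b) := by
          have : midpoint ℝ x y - star (h : ℋ →L[ℂ] ℋ) * h = (1 / 2 : ℝ) •
            ((x - star (h : ℋ →L[ℂ] ℋ) * h) + (y - star (h : ℋ →L[ℂ] ℋ) * h)) := by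
            rw [hmid]; module
          rw [this, ha, hb, mul_smul_comm, smul_mul_assoc, mul_add, add_mul]
        have e2 : x - y = star (↑g⁻¹ : ℋ →L[ℂ] ℋ) * (a - b) * (↑g⁻¹ : ℋ →L[ℂ] ℋ) := by
          have : a - b = star (g : ℋ →L[ℂ] ℋ) * (x - y) * g := by
            rw [ha, hb]; noncomm_ring
          rw [this, mul_assoc, mul_assoc, Units.mul_inv, mul_one, ← mul_assoc, ← star_mul,
            Units.mul_inv, star_one, one_mul]
        have e3 : ‖x - y‖ ≤ B ^ 2 * ‖a - b‖ := by
          have hi := hnorm _ (H.inv_mem hg)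
          calc ‖x - y‖ ≤ ‖(↑g⁻¹ : ℋ →L[ℂ] ℋ)‖ * ‖a - b‖ * ‖(↑g⁻¹ : ℋ →L[ℂ] ℋ)‖ := by
                rw [e2]
                refine (norm_mul_le _ _).trans ?_
                gcongr
                refine (norm_mul_le _ _).trans ?_
                rw [norm_star]
            _ ≤ B * ‖a - b‖ * B := by gcongr
            _ = _ := by ring
        have e4 : 1 / (4 * B ^ 4) * ‖x - y‖ ^ 2 ≤ (1 / 2) ^ 2 * ‖a - b‖ ^ 2 := by
          calc 1 / (4 * B ^ 4) * ‖x - y‖ ^ 2 ≤ 1 / (4 * B ^ 4) * (B ^ 2 * ‖a - b‖) ^ 2 := by gcongr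
            _ = _ := by field_simp; ring
        have hxa := hx.2.2 g hg h hh
        have hyb := hy.2.2 g hg h hh
        rw [← ha] at hxa
        rw [← hb] at hyb
        rw [e1, hsS_smul]
        calc _ ≤ ENNReal.ofReal ((1 / 2) ^ 2) * hsS e (a + b)
              + ENNReal.ofReal ((1 / 2) ^ 2) * hsS e (a - b) := by
              gcongr
              refine (ENNReal.ofReal_le_ofReal e4).trans ?_
              rw [ENNReal.ofReal_mul (by positivity)]
              gcongr
              exact norm_le_hsS e _
          _ = ENNReal.ofReal ((1 / 2) ^ 2) * (2 * (hsS e a + hsS e b)) := by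
              rw [← mul_add, hsS_para]
          _ ≤ ENNReal.ofReal ((1 / 2) ^ 2) * (2 * (ENNReal.ofReal C + ENNReal.ofReal C)) := by
              gcongr
          _ = ENNReal.ofReal C := by
              have hC := hx.1
              rw [show (2 : ℝ≥0∞) = ENNReal.ofReal 2 by simp, ← ENNReal.ofReal_add hC hC,
                ← ENNReal.ofReal_mul (by positivity), ← ENNReal.ofReal_mul (by positivity)]
              congr 1; ring
      refine ⟨?_, ?_, ?_⟩
      · have := le_add_self.trans (main 1 H.one_mem 1 H.one_mem)
        rw [ENNReal.ofReal_le_ofReal_iff hx.1] at this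
        linarith
      · intro g hg
        have h1 := smul_le_smul_of_nonneg_left (add_le_add (hx.2.1 g hg) (hy.2.1 g hg))
          (show (0 : ℝ) ≤ 1 / 2 by norm_num)
        rw [hmid, mul_smul_comm, smul_mul_assoc, mul_add, add_mul]
        convert h1 using 1
        module
      · intro g hg h hh
        rw [ENNReal.ofReal_sub _ (by positivity)]
        exact ENNReal.le_sub_of_add_le_right ENNReal.ofReal_ne_top (main g hg h hh))
    (by
      set D := 2 * (ENNReal.ofReal (B ^ 2) * ENNReal.ofReal (M ^ 2) + ENNReal.ofReal (M ^ 2)) with hD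
      have hDt : 2 * (D + D) ≠ ⊤ := by
        rw [hD]; finiteness
      refine ⟨(2 * (D + D)).toReal, 1, ENNReal.toReal_nonneg, hlow, fun g hg h hh => ?_⟩
      rw [ENNReal.ofReal_toReal hDt]
      have e1 : star (g : ℋ →L[ℂ] ℋ) * (1 - star (h : ℋ →L[ℂ] ℋ) * h) * g
          = (star (g : ℋ →L[ℂ] ℋ) * g - 1)
            - (star (↑(h * g) : ℋ →L[ℂ] ℋ) * (↑(h * g) : ℋ →L[ℂ] ℋ) - 1) := by
        rw [Units.val_mul, star_mul]; noncomm_ring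
      rw [e1]
      refine (hsS_sub e _ _).trans ?_
      have h1 := hSS g hg
      have h2 := hSS _ (H.mul_mem hh hg)
      gcongr)
  have hinv : ∀ k ∈ H, star (k : ℋ →L[ℂ] ℋ) * p * k = p := by
    intro k hk
    refine hfix (fun q => star (k : ℋ →L[ℂ] ℋ) * q * k) fun C q hq => ⟨hq.1, ?_, ?_⟩
    · intro g hg
      convert hq.2.1 _ (H.mul_mem hk hg) using 1
      rw [Units.val_mul, star_mul]; noncomm_ring
    · intro g hg h hh
      convert hq.2.2 _ (H.mul_mem hk hg) _ (H.mul_mem hh (H.inv_mem hk)) using 2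
      have h1 : (h : ℋ →L[ℂ] ℋ) = (↑(h * k⁻¹) : ℋ →L[ℂ] ℋ) * k := by
        rw [← Units.val_mul]; simp
      rw [show star (h : ℋ →L[ℂ] ℋ) * (h : ℋ →L[ℂ] ℋ) = star ((↑(h * k⁻¹) : ℋ →L[ℂ] ℋ) * k)
        * ((↑(h * k⁻¹) : ℋ →L[ℂ] ℋ) * k) by rw [← h1]]
      rw [star_mul, Units.val_mul k g, star_mul]
      noncomm_ring
  have hple : algebraMap ℝ (ℋ →L[ℂ] ℋ) ((B ^ 2)⁻¹) ≤ p := by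
    simpa using hpK 1 H.one_mem
  have hε : 0 < (B ^ 2)⁻¹ := by positivity
  have hsp : IsStrictlyPositive (algebraMap ℝ (ℋ →L[ℂ] ℋ) ((B ^ 2)⁻¹)) :=
    ⟨algebraMap_nonneg _ hε.le, (isUnit_iff_ne_zero.2 hε.ne').map _⟩
  have hpp := hsp.of_le hple
  have hrr : CFC.sqrt p * CFC.sqrt p = p := CFC.sqrt_mul_sqrt_self p hpp.nonneg
  have hru : IsUnit (CFC.sqrt p) := by
    have hu : IsUnit (CFC.sqrt p * CFC.sqrt p) := by rw [hrr]; exact hpp.isUnit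
    exact ((Commute.refl _).isUnit_mul_iff.1 hu).1
  have hrs : star (CFC.sqrt p) = CFC.sqrt p := (CFC.sqrt_nonneg p).isSelfAdjoint
  obtain ⟨r, hr⟩ := hru
  rw [← hr] at hrr hrs
  refine ⟨r⁻¹, fun h hh => ?_⟩
  have hrs' : star (↑r⁻¹ : ℋ →L[ℂ] ℋ) = ↑r⁻¹ := by
    have : star r = r := Units.ext hrs
    rw [← Units.coe_star, star_inv, this]
  rw [inv_inv]
  have hun : star ((r : ℋ →L[ℂ] ℋ) * h * (↑r⁻¹ : ℋ →L[ℂ] ℋ)) *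
      ((r : ℋ →L[ℂ] ℋ) * h * (↑r⁻¹ : ℋ →L[ℂ] ℋ)) = 1 := by
    rw [star_mul, star_mul, hrs, hrs']
    calc _ = (↑r⁻¹ : ℋ →L[ℂ] ℋ) * (star (h : ℋ →L[ℂ] ℋ) * ((r : ℋ →L[ℂ] ℋ) * r) * h)
          * (↑r⁻¹ : ℋ →L[ℂ] ℋ) := by noncomm_ring
      _ = 1 := by
        rw [hrr, hinv h hh, ← hrr]; simp [← mul_assoc]
  refine ⟨hun, ?_⟩
  have hU : IsUnit ((r : ℋ →L[ℂ] ℋ) * h * (↑r⁻¹ : ℋ →L[ℂ] ℋ)) :=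
    (r * h * r⁻¹).isUnit
  obtain ⟨w, hw⟩ := hU
  rw [← hw] at hun ⊢
  rw [show star (w : ℋ →L[ℂ] ℋ) = (↑w⁻¹ : ℋ →L[ℂ] ℋ) from w.isUnit.mul_left_injective (by simpa using hun)]
  simp
end
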